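/- arXiv:2205.07346 — 2 statements merged into one kernel-verified Lean document; each statement's English description precedes it below -/
import Mathlib

section
/- Let F be a finite field, n a natural number, and t a natural number. The maximum cardinality of a set C of linear subspaces of F^n with the property that for all distinct U, V ∈ C, V ⊆ U implies dim U − dim V > t, equals the sum over all ℓ with 0 ≤ ℓ ≤ n and ℓ ≡ ⌊n/2⌋ (mod t+1) of the number of ℓ-dimensional subspaces of F^n. -/
namespace Katona

lemma num_pair {n T : ℕ} {w : ℕ → ℕ} (hT : 1 ≤ T)
    (sym : ∀ k ≤ n, w (n - k) = w k)
    (dbl : ∀ k, 1 ≤ k → 2 * k ≤ n → 2 * w (k - 1) ≤ w k)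
    (S : Finset ℕ) (hS : ∀ a ∈ S, a ≤ n)
    (sep : ∀ a ∈ S, ∀ b ∈ S, a < b → a + T ≤ b)
    (hodd : n / 2 ∈ S ∨ n - n / 2 ∉ S) :
    ∑ s ∈ S, w s ≤ ∑ l ∈ Finset.range (n + 1), if l % T = (n / 2) % T then w l else 0 := by
  classical
  have mono1 : ∀ d a, 2 * (a + d) ≤ n → w a ≤ w (a + d) := by
    intro d
    induction d with
    | zero => intro a _; exact le_rfl
    | succ d ih =>
      intro a h
      have h1 := ih a (by omega)
      have h2 := dbl (a + (d + 1)) (by omega) h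
      have e : a + (d + 1) - 1 = a + d := by omega
      rw [e] at h2
      omega
  have mono : ∀ a b, a ≤ b → b ≤ n / 2 → w a ≤ w b := by
    intro a b h1 h2
    obtain ⟨d, rfl⟩ := Nat.exists_eq_add_of_le h1
    exact mono1 d a (by omega)
  have anti : ∀ a b, n / 2 ≤ a → a ≤ b → b ≤ n → w b ≤ w a := by
    intro a b h1 h2 h3
    rcases eq_or_lt_of_le h2 with rfl | h2
    · exact le_rfl
    rw [← sym b h3]
    by_cases h : n - a ≤ n / 2
    · rw [← sym a (by omega)]
      exact mono _ _ (by omega) h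
    · have : a = n / 2 := by omega
      rw [this]
      exact mono _ _ (by omega) le_rfl
  -- the block map
  let φ : ℕ → ℕ := fun s => if s ≤ n / 2 then n / 2 - (n / 2 - s) / T * T
    else n / 2 + (s - n / 2) / T * T
  have φle : ∀ s ≤ n / 2, s ≤ φ s ∧ φ s < s + T ∧ φ s ≤ n / 2 := by
    intro s h
    have h1 := Nat.div_add_mod (n / 2 - s) T
    have h2 := Nat.mod_lt (n / 2 - s) hT
    simp only [φ, h, if_true]
    rw [Nat.mul_comm] at h1
    omega
  have φgt : ∀ s, n / 2 ≤ s → φ s ≤ s ∧ s < φ s + T ∧ n / 2 ≤ φ s := by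
    intro s h
    by_cases h' : s ≤ n / 2
    · have : s = n / 2 := by omega
      subst this
      simp [φ]; omega
    have h1 := Nat.div_add_mod (s - n / 2) T
    have h2 := Nat.mod_lt (s - n / 2) hT
    simp only [φ, h', if_false]
    rw [Nat.mul_comm] at h1
    omega
  have φmod : ∀ s, φ s % T = (n / 2) % T := by
    intro s
    by_cases h : s ≤ n / 2
    · have h1 := Nat.div_mul_le_self (n / 2 - s) T
      simp only [φ, h, if_true]
      conv_rhs => rw [show n / 2 = (n / 2 - (n / 2 - s) / T * T) + (n / 2 - s) / T * T by omega]
      rw [Nat.add_mul_mod_self_right]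
    · simp only [φ, h, if_false]
      rw [Nat.add_mul_mod_self_right]
  have φn : ∀ s ≤ n, φ s ≤ n := by
    intro s h
    rcases le_total s (n / 2) with h1 | h1
    · have := φle s h1; omega
    · have := φgt s h1; omega
  -- summing over an injective part
  have key : ∀ (A : Finset ℕ) (f : ℕ → ℕ), (∀ s ∈ A, f s ≤ n) →
      Set.InjOn (fun s => φ (f s)) A → ∑ s ∈ A, w (φ (f s)) ≤
      ∑ l ∈ Finset.range (n + 1), if l % T = (n / 2) % T then w l else 0 := by
    intro A f hA hinj
    rw [← Finset.sum_filter, ← Finset.sum_image (f := w) (g := fun s => φ (f s)) hinj]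
    apply Finset.sum_le_sum_of_subset
    intro x hx
    obtain ⟨s, hs, rfl⟩ := Finset.mem_image.1 hx
    have := φn (f s) (hA s hs)
    simp only [Finset.mem_filter, Finset.mem_range]
    exact ⟨by omega, φmod _⟩
  have injL : ∀ a ∈ S, ∀ b ∈ S, a ≤ n / 2 → b ≤ n / 2 → φ a = φ b → a = b := by
    intro a ha b hb h1 h2 h
    have := φle a h1
    have := φle b h2
    rcases lt_trichotomy a b with h3 | h3 | h3
    · have := sep a ha b hb h3; omega
    · exact h3
    · have := sep b hb a ha h3; omega
  have injR : ∀ a ∈ S, ∀ b ∈ S, n / 2 ≤ a → n / 2 ≤ b → φ a = φ b → a = b := by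
    intro a ha b hb h1 h2 h
    have := φgt a h1
    have := φgt b h2
    rcases lt_trichotomy a b with h3 | h3 | h3
    · have := sep a ha b hb h3; omega
    · exact h3
    · have := sep b hb a ha h3; omega
  by_cases hm : n / 2 ∈ S
  · have inj : Set.InjOn φ S := by
      have cross : ∀ a ∈ S, ∀ b ∈ S, a < n / 2 → n / 2 < b → φ a ≠ φ b := by
        intro a ha b hb h1 h2 h
        have := φle a h1.le
        have := φgt b h2.le
        have := sep a ha _ hm h1
        omega
      intro a ha b hb h
      rcases le_or_gt a (n / 2) with h1 | h1 <;> rcases le_or_gt b (n / 2) with h2 | h2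
      · exact injL a ha b hb h1 h2 h
      · rcases eq_or_lt_of_le h1 with h1 | h1
        · exact injR a ha b hb h1.ge h2.le h
        · exact absurd h (cross a ha b hb h1 h2)
      · rcases eq_or_lt_of_le h2 with h2 | h2
        · exact injR a ha b hb h1.le h2.ge h
        · exact absurd h.symm (cross b hb a ha h2 h1)
      · exact injR a ha b hb h1.le h2.le h
    refine le_trans (Finset.sum_le_sum ?_) (key S id hS inj)
    intro s hs
    rcases le_total s (n / 2) with h1 | h1
    · have := φle s h1
      exact mono s (φ s) (by omega) (by omega)
    · have := φgt s h1
      exact anti (φ s) s (by omega) (by omega) (hS s hs)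
  · have hm' : n - n / 2 ∉ S := hodd.resolve_left hm
    have dblR : ∀ s, n - n / 2 < s → s ≤ n → 2 * w s ≤ w (s - 1) := by
      intro s h1 h2
      have h3 := dbl (n - s + 1) (by omega) (by omega)
      have h4 := sym s h2
      have h5 := sym (s - 1) (by omega)
      have e1 : n - s + 1 - 1 = n - s := by omega
      have e2 : n - (s - 1) = n - s + 1 := by omega
      rw [e1, h4] at h3
      rw [e2] at h5
      omega
    have hL : ∑ s ∈ S with s < n / 2, 2 * w s ≤
        ∑ l ∈ Finset.range (n + 1), if l % T = (n / 2) % T then w l else 0 := by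
      refine le_trans (Finset.sum_le_sum ?_)
        (key (S.filter (· < n / 2)) (fun s => s + 1) ?_ ?_)
      · intro s hs
        obtain ⟨hs, h1⟩ := Finset.mem_filter.1 hs
        have h2 := φle (s + 1) (by omega)
        have h4 := dbl (s + 1) (by omega) (by omega)
        have h5 := mono (s + 1) (φ (s + 1)) (by omega) (by omega)
        simp only [Nat.add_sub_cancel] at h4
        omega
      · intro s hs
        obtain ⟨hs, h1⟩ := Finset.mem_filter.1 hs
        show s + 1 ≤ n
        omega
      · intro a ha b hb h
        obtain ⟨ha, h1⟩ := Finset.mem_filter.1 ha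
        obtain ⟨hb, h2⟩ := Finset.mem_filter.1 hb
        have h' : φ (a + 1) = φ (b + 1) := h
        have := φle (a + 1) (by omega)
        have := φle (b + 1) (by omega)
        rcases lt_trichotomy a b with h3 | h3 | h3
        · have := sep a ha b hb h3; omega
        · exact h3
        · have := sep b hb a ha h3; omega
    have hR : ∑ s ∈ S with ¬ s < n / 2, 2 * w s ≤
        ∑ l ∈ Finset.range (n + 1), if l % T = (n / 2) % T then w l else 0 := by
      have big : ∀ s ∈ S, ¬ s < n / 2 → n - n / 2 < s := by
        intro s hs h
        have hne : s ≠ n / 2 := by rintro rfl; exact hm hs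
        have hne' : s ≠ n - n / 2 := by rintro rfl; exact hm' hs
        omega
      refine le_trans (Finset.sum_le_sum ?_)
        (key (S.filter (¬ · < n / 2)) (fun s => s - 1) ?_ ?_)
      · intro s hs
        obtain ⟨hs, h1⟩ := Finset.mem_filter.1 hs
        have h0 := big s hs h1
        have h2 := φgt (s - 1) (by omega)
        have h4 := dblR s h0 (hS s hs)
        have hn := hS s hs
        have h5 := anti (φ (s - 1)) (s - 1) (by omega) (by omega) (by omega)
        show 2 * w s ≤ w (φ (s - 1))
        omega
      · intro s hs
        obtain ⟨hs, h1⟩ := Finset.mem_filter.1 hs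
        have hn := hS s hs
        show s - 1 ≤ n
        omega
      · intro a ha b hb h
        obtain ⟨ha, h1⟩ := Finset.mem_filter.1 ha
        obtain ⟨hb, h2⟩ := Finset.mem_filter.1 hb
        have h' : φ (a - 1) = φ (b - 1) := h
        have := big a ha h1
        have := big b hb h2
        have := φgt (a - 1) (by omega)
        have := φgt (b - 1) (by omega)
        rcases lt_trichotomy a b with h3 | h3 | h3
        · have := sep a ha b hb h3; omega
        · exact h3
        · have := sep b hb a ha h3; omega
    have hsplit := Finset.sum_filter_add_sum_filter_not S (· < n / 2) (fun s => w s)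
    rw [← Finset.mul_sum] at hL hR
    omega

lemma num {n T : ℕ} {w : ℕ → ℕ} (hT : 1 ≤ T)
    (sym : ∀ k ≤ n, w (n - k) = w k)
    (dbl : ∀ k, 1 ≤ k → 2 * k ≤ n → 2 * w (k - 1) ≤ w k)
    (S : Finset ℕ) (hS : ∀ a ∈ S, a ≤ n)
    (sep : ∀ a ∈ S, ∀ b ∈ S, a < b → a + T ≤ b) :
    ∑ s ∈ S, w s ≤ ∑ l ∈ Finset.range (n + 1), if l % T = (n / 2) % T then w l else 0 := by
  classical
  by_cases h : n / 2 ∈ S ∨ n - n / 2 ∉ S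
  · exact num_pair hT sym dbl S hS sep h
  · push Not at h
    have hinj : Set.InjOn (fun s => n - s) (S : Set ℕ) := by
      intro a ha b hb hab
      have := hS a ha
      have := hS b hb
      have : n - a = n - b := hab
      omega
    have e : ∑ s ∈ S, w s = ∑ s ∈ S.image (fun s => n - s), w s := by
      rw [Finset.sum_image hinj]
      exact Finset.sum_congr rfl fun s hs => (sym s (hS s hs)).symm
    rw [e]
    refine num_pair hT sym dbl _ ?_ ?_ (Or.inl ?_)
    · intro a ha
      obtain ⟨s, hs, rfl⟩ := Finset.mem_image.1 ha
      exact Nat.sub_le _ _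
    · intro a ha b hb hab
      obtain ⟨s, hs, rfl⟩ := Finset.mem_image.1 ha
      obtain ⟨r, hr, rfl⟩ := Finset.mem_image.1 hb
      have := hS s hs
      have := hS r hr
      have := sep r hr s hs (by omega)
      omega
    · exact Finset.mem_image.2 ⟨n - n / 2, h.2, by omega⟩

lemma rec_sym {q n : ℕ} (hq : 2 ≤ q) {w : ℕ → ℕ} (h0 : w 0 = 1) (hn : w n = 1)
    (hr : ∀ k, 1 ≤ k → k ≤ n → w k * (q ^ k - 1) = w (k - 1) * (q ^ (n - k + 1) - 1)) :
    ∀ k ≤ n, w (n - k) = w k := by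
  intro k
  induction k with
  | zero => intro _; simp [h0, hn]
  | succ k ih =>
    intro hk
    have h1 := hr (k + 1) (by omega) hk
    have h2 := hr (n - k) (by omega) (by omega)
    have e1 : n - (k + 1) + 1 = n - k := by omega
    have e2 : n - (n - k) + 1 = k + 1 := by omega
    have e3 : n - k - 1 = n - (k + 1) := by omega
    rw [e1, Nat.add_sub_cancel] at h1
    rw [e2, e3, ih (by omega), ← h1] at h2
    have hpos : 0 < q ^ (k + 1) - 1 := by
      have := Nat.one_lt_pow (n := k + 1) (by omega) (show 1 < q by omega)
      omega
    exact (Nat.eq_of_mul_eq_mul_right hpos h2).symm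

lemma rec_dbl {q n : ℕ} (hq : 2 ≤ q) {w : ℕ → ℕ}
    (hr : ∀ k, 1 ≤ k → k ≤ n → w k * (q ^ k - 1) = w (k - 1) * (q ^ (n - k + 1) - 1)) :
    ∀ k, 1 ≤ k → 2 * k ≤ n → 2 * w (k - 1) ≤ w k := by
  intro k h1 h2
  have h := hr k h1 (by omega)
  have hpos : 0 < q ^ k - 1 := by
    have := Nat.one_lt_pow (n := k) (by omega) (show 1 < q by omega)
    omega
  have hle : 2 * (q ^ k - 1) ≤ q ^ (n - k + 1) - 1 := by
    have a1 : q ^ (k + 1) ≤ q ^ (n - k + 1) := Nat.pow_le_pow_right (by omega) (by omega)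
    have a2 : 2 * q ^ k ≤ q ^ (k + 1) := by
      rw [pow_succ, Nat.mul_comm]; exact Nat.mul_le_mul_left _ hq
    omega
  refine Nat.le_of_mul_le_mul_right ?_ hpos
  rw [h]
  calc 2 * w (k - 1) * (q ^ k - 1) = w (k - 1) * (2 * (q ^ k - 1)) := by ring
    _ ≤ _ := Nat.mul_le_mul_left _ hle

section vs
variable {F : Type*} [Field F] [Fintype F] {V : Type*} [AddCommGroup V] [Module F V] [Finite V]

lemma count (k : ℕ) (hk : k ≤ Module.finrank F V) :
    Nat.card {U : Submodule F V // Module.finrank F U = k} *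
      ∏ i : Fin k, (Fintype.card F ^ k - Fintype.card F ^ i.val) =
      ∏ i : Fin k, (Fintype.card F ^ Module.finrank F V - Fintype.card F ^ i.val) := by
  classical
  have : Fintype V := Fintype.ofFinite V
  have : Finite (Submodule F V) := Finite.of_injective (fun U : Submodule F V => (U : Set V)) SetLike.coe_injective
  have : Fintype {U : Submodule F V // Module.finrank F U = k} := Fintype.ofFinite _
  rw [← card_linearIndependent (K := F) (V := V) hk]
  let f : {s : Fin k → V // LinearIndependent F s} → {U : Submodule F V // Module.finrank F U = k} :=
    fun s => ⟨Submodule.span F (Set.range s.1), by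
      rw [finrank_span_eq_card s.2, Fintype.card_fin]⟩
  rw [← Nat.card_congr (Equiv.sigmaFiberEquiv f), Nat.card_sigma]
  have : ∀ U : {U : Submodule F V // Module.finrank F U = k},
      Nat.card {s // f s = U} = ∏ i : Fin k, (Fintype.card F ^ k - Fintype.card F ^ i.val) := by
    rintro ⟨U, hU⟩
    have : Fintype U := Fintype.ofFinite U
    have h := card_linearIndependent (K := F) (V := U) (k := k) hU.ge
    rw [hU] at h
    rw [← h]
    refine Nat.card_congr
      { toFun := fun s => ⟨fun i => ⟨s.1.1 i, ?_⟩, ?_⟩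
        invFun := fun s => ⟨⟨fun i => (s.1 i : V), ?_⟩, ?_⟩
        left_inv := fun s => rfl
        right_inv := fun s => rfl }
    · have : Submodule.span F (Set.range s.1.1) = U := congrArg Subtype.val s.2
      exact this.le (Submodule.subset_span ⟨i, rfl⟩)
    · exact LinearIndependent.of_comp U.subtype s.1.2
    · exact s.2.map' U.subtype (Submodule.ker_subtype U)
    · apply Subtype.ext
      show Submodule.span F (Set.range fun i => (s.1 i : V)) = U
      apply Submodule.eq_of_le_of_finrank_eq
      · rw [Submodule.span_le]
        rintro _ ⟨i, rfl⟩
        exact (s.1 i).2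
      · have h5 := finrank_span_eq_card (s.2.map' U.subtype (Submodule.ker_subtype U))
        rw [Fintype.card_fin] at h5
        exact h5.trans hU.symm
  rw [Finset.sum_congr rfl (fun U _ => this U), Finset.sum_const, smul_eq_mul, Finset.card_univ,
    Nat.card_eq_fintype_card]

lemma count_rec (k : ℕ) (h1 : 1 ≤ k) (hk : k ≤ Module.finrank F V) :
    Nat.card {U : Submodule F V // Module.finrank F U = k} * (Fintype.card F ^ k - 1) =
    Nat.card {U : Submodule F V // Module.finrank F U = k - 1} *
      (Fintype.card F ^ (Module.finrank F V - k + 1) - 1) := by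
  obtain ⟨k, rfl⟩ := Nat.exists_eq_add_of_le' h1
  have hq : 2 ≤ Fintype.card F := Fintype.one_lt_card
  have ha := count (F := F) (V := V) (k + 1) hk
  have hb := count (F := F) (V := V) k (by omega)
  rw [Nat.add_sub_cancel]
  generalize Nat.card {U : Submodule F V // Module.finrank F U = k + 1} = x at *
  generalize Nat.card {U : Submodule F V // Module.finrank F U = k} = y at *
  generalize Module.finrank F V = n at *
  generalize Fintype.card F = q at *
  rw [Fin.prod_univ_succ, Fin.prod_univ_castSucc] at ha
  simp only [Fin.val_zero, pow_zero, Fin.val_succ, Fin.val_castSucc, Fin.val_last] at ha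
  have e : ∏ i : Fin k, (q ^ (k + 1) - q ^ (i.val + 1)) = q ^ k * ∏ i : Fin k, (q ^ k - q ^ i.val) := by
    have : ∀ i : Fin k, q ^ (k + 1) - q ^ (i.val + 1) = q * (q ^ k - q ^ i.val) := by
      intro i; rw [Nat.mul_sub]; ring_nf
    simp [this, Finset.prod_mul_distrib]
  have e2 : q ^ n - q ^ k = q ^ k * (q ^ (n - (k + 1) + 1) - 1) := by
    rw [Nat.mul_sub, ← pow_add, mul_one]; congr 2; omega
  rw [e, e2, ← hb] at ha
  have hpos : 0 < q ^ k * ∏ i : Fin k, (q ^ k - q ^ i.val) := by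
    apply Nat.mul_pos (by positivity)
    apply Finset.prod_pos
    intro i _
    have := Nat.pow_lt_pow_right (show 1 < q by omega) i.2
    omega
  apply Nat.eq_of_mul_eq_mul_right hpos
  linarith

lemma trans_gl (U W : Submodule F V) (h : Module.finrank F U = Module.finrank F W) :
    ∃ g : V ≃ₗ[F] V, U.map (g : V →ₗ[F] V) = W := by
  obtain ⟨U', hU⟩ := U.exists_isCompl
  obtain ⟨W', hW⟩ := W.exists_isCompl
  have h1 := Submodule.finrank_add_eq_of_isCompl hU
  have h2 := Submodule.finrank_add_eq_of_isCompl hW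
  let e1 : U ≃ₗ[F] W := LinearEquiv.ofFinrankEq _ _ h
  let e2 : U' ≃ₗ[F] W' := LinearEquiv.ofFinrankEq _ _ (by omega)
  let g : V ≃ₗ[F] V := (U.prodEquivOfIsCompl U' hU).symm ≪≫ₗ (e1.prodCongr e2) ≪≫ₗ
    (W.prodEquivOfIsCompl W' hW)
  refine ⟨g, ?_⟩
  apply Submodule.eq_of_le_of_finrank_eq
  · rintro _ ⟨u, hu, rfl⟩
    have : (U.prodEquivOfIsCompl U' hU).symm u = (⟨u, hu⟩, 0) :=
      Submodule.prodEquivOfIsCompl_symm_apply_left U U' hU ⟨u, hu⟩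
    show (W.prodEquivOfIsCompl W' hW) (e1.prodCongr e2 ((U.prodEquivOfIsCompl U' hU).symm u)) ∈ W
    rw [this]
    simp
  · rw [← h]
    exact LinearEquiv.finrank_map_eq g U

lemma exists_flag : ∃ E : ℕ → Submodule F V, Monotone E ∧
    ∀ k ≤ Module.finrank F V, Module.finrank F (E k) = k := by
  let b := Module.finBasis F V
  refine ⟨fun k => Submodule.span F (Set.range fun i : {i : Fin (Module.finrank F V) // i.val < k} => b i.1), ?_, ?_⟩
  · intro k l hkl
    apply Submodule.span_mono
    rintro _ ⟨i, rfl⟩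
    exact ⟨⟨i.1, i.2.trans_le hkl⟩, rfl⟩
  · intro k hk
    show Module.finrank F (Submodule.span F _) = k
    have h5 := finrank_span_eq_card (b.linearIndependent.comp
      (Subtype.val : {i : Fin (Module.finrank F V) // i.val < k} → _) Subtype.val_injective)
    refine h5.trans ?_
    rw [Fintype.card_subtype]
    rw [Fin.card_filter_val_lt]
    omega

lemma upper (T M : ℕ) (C : Finset (Submodule F V))
    (hC : ∀ U ∈ C, ∀ W ∈ C, U ≠ W → W ≤ U → Module.finrank F W + T ≤ Module.finrank F U)
    (hM : ∀ S : Finset ℕ, (∀ a ∈ S, a ≤ Module.finrank F V) →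
      (∀ a ∈ S, ∀ b ∈ S, a < b → a + T ≤ b) →
      ∑ s ∈ S, Nat.card {U : Submodule F V // Module.finrank F U = s} ≤ M) :
    C.card ≤ M := by
  classical
  obtain ⟨E, hE, hEk⟩ := exists_flag (F := F) (V := V)
  have : Finite (Submodule F V) :=
    Finite.of_injective (fun U : Submodule F V => (U : Set V)) SetLike.coe_injective
  have : Finite (V ≃ₗ[F] V) :=
    Finite.of_injective (fun g : V ≃ₗ[F] V => (g : V → V)) DFunLike.coe_injective
  have : Fintype (Submodule F V) := Fintype.ofFinite _
  have : Fintype (V ≃ₗ[F] V) := Fintype.ofFinite _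
  set n := Module.finrank F V with hn
  set w : ℕ → ℕ := fun k => Nat.card {U : Submodule F V // Module.finrank F U = k} with hw
  let N : Submodule F V → ℕ := fun U =>
    (Finset.univ.filter fun g : V ≃ₗ[F] V => (E (Module.finrank F U)).map (g : V →ₗ[F] V) = U).card
  have hNeq : ∀ U W : Submodule F V, Module.finrank F U = Module.finrank F W → N U ≤ N W := by
    intro U W h
    obtain ⟨x, hx⟩ := trans_gl U W h
    apply Finset.card_le_card_of_injOn (fun g => g ≪≫ₗ x)
    · intro g hg
      have hg' : (E (Module.finrank F U)).map (g : V →ₗ[F] V) = U := (Finset.mem_filter.1 hg).2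
      refine Finset.mem_coe.2 (Finset.mem_filter.2 ⟨Finset.mem_univ _, ?_⟩)
      rw [← h, LinearEquiv.coe_trans, Submodule.map_comp, hg', hx]
    · intro g _ g' _ hgg
      ext v
      have := LinearEquiv.congr_fun hgg v
      exact x.injective this
  have hN : ∀ U : Submodule F V, w (Module.finrank F U) * N U = Fintype.card (V ≃ₗ[F] V) := by
    intro U
    have hUn : Module.finrank F U ≤ n := Submodule.finrank_le U
    have h1 : (Finset.univ : Finset (V ≃ₗ[F] V)).card =
        ∑ W ∈ Finset.univ.filter (fun W : Submodule F V => Module.finrank F W = Module.finrank F U),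
          (Finset.univ.filter fun g : V ≃ₗ[F] V =>
            (E (Module.finrank F U)).map (g : V →ₗ[F] V) = W).card := by
      apply Finset.card_eq_sum_card_fiberwise
      intro g _
      refine Finset.mem_coe.2 (Finset.mem_filter.2 ⟨Finset.mem_univ _, ?_⟩)
      rw [LinearEquiv.finrank_map_eq g, hEk _ hUn]
    rw [← Finset.card_univ, h1]
    rw [Finset.sum_congr rfl (g := fun _ => N U), Finset.sum_const, smul_eq_mul]
    · congr 1
      rw [hw]
      simp only [Nat.card_eq_fintype_card, Fintype.card_subtype]
    · intro W hW
      have hW' := (Finset.mem_filter.1 hW).2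
      rw [← hW']
      exact le_antisymm (hNeq W U hW') (hNeq U W hW'.symm)
  have hpos : 0 < Fintype.card (V ≃ₗ[F] V) := Fintype.card_pos_iff.2 ⟨LinearEquiv.refl F V⟩
  refine Nat.le_of_mul_le_mul_right ?_ hpos
  calc C.card * Fintype.card (V ≃ₗ[F] V)
      = ∑ U ∈ C, w (Module.finrank F U) * N U := by simp [hN]
    _ = ∑ U ∈ C, ∑ g : V ≃ₗ[F] V,
          if (E (Module.finrank F U)).map (g : V →ₗ[F] V) = U then w (Module.finrank F U) else 0 := by
        refine Finset.sum_congr rfl fun U _ => ?_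
        rw [← Finset.sum_filter, Finset.sum_const, smul_eq_mul, mul_comm]
    _ = ∑ g : V ≃ₗ[F] V, ∑ U ∈ C,
          if (E (Module.finrank F U)).map (g : V →ₗ[F] V) = U then w (Module.finrank F U) else 0 :=
        Finset.sum_comm
    _ ≤ ∑ g : V ≃ₗ[F] V, M := by
        refine Finset.sum_le_sum fun g _ => ?_
        rw [← Finset.sum_filter]
        set D := C.filter fun U : Submodule F V => (E (Module.finrank F U)).map (g : V →ₗ[F] V) = U with hD
        have hDm : ∀ U ∈ D, U ∈ C ∧ (E (Module.finrank F U)).map (g : V →ₗ[F] V) = U :=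
          by
          intro U hU
          rw [hD, Finset.mem_filter] at hU
          exact hU
        have hinj : Set.InjOn (fun U : Submodule F V => Module.finrank F U) (D : Set (Submodule F V)) := by
          intro U hU W hW h
          have h : Module.finrank F U = Module.finrank F W := h
          rw [← (hDm U hU).2, ← (hDm W hW).2, h]
        rw [← Finset.sum_image (f := w) (g := fun U : Submodule F V => Module.finrank F U) hinj]
        apply hM
        · intro a ha
          obtain ⟨U, _, rfl⟩ := Finset.mem_image.1 ha
          exact Submodule.finrank_le U
        · intro a ha b hb hab
          obtain ⟨U, hU, rfl⟩ := Finset.mem_image.1 ha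
          obtain ⟨W, hW, rfl⟩ := Finset.mem_image.1 hb
          refine hC W (hDm W hW).1 U (hDm U hU).1 ?_ ?_
          · rintro rfl; exact lt_irrefl _ hab
          · rw [← (hDm U hU).2, ← (hDm W hW).2]
            exact Submodule.map_mono (hE hab.le)
    _ = M * Fintype.card (V ≃ₗ[F] V) := by simp [mul_comm]

end vs

end Katona

/-- q-analog of Katona's theorem: the maximum cardinality of a subspace code
`C ⊆ P_q(n)` detecting dimension reductions of up to `t` (distinct nested codeword
subspaces have dimensions differing by more than `t`) equals the sum of the numbers
of `ℓ`-dimensional subspaces over `0 ≤ ℓ ≤ n` with `ℓ ≡ ⌊n/2⌋ (mod t+1)`. -/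
theorem stmt8 (F : Type*) [Field F] [Fintype F] (n t : ℕ) :
    IsGreatest {k | ∃ C : Finset (Submodule F (Fin n → F)),
        (∀ U ∈ C, ∀ V ∈ C, U ≠ V → V ≤ U →
          Module.finrank F U - Module.finrank F V > t) ∧ C.card = k}
      (∑ ℓ ∈ Finset.range (n + 1),
        if ℓ % (t + 1) = (n / 2) % (t + 1) then
          Nat.card {U : Submodule F (Fin n → F) // Module.finrank F U = ℓ}
        else 0) := by
  classical
  have hfin : Module.finrank F (Fin n → F) = n := by simp
  have : Finite (Submodule F (Fin n → F)) :=
    Finite.of_injective (fun U : Submodule F (Fin n → F) => (U : Set (Fin n → F)))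
      SetLike.coe_injective
  have : Fintype (Submodule F (Fin n → F)) := Fintype.ofFinite _
  constructor
  · refine ⟨Finset.univ.filter fun U => Module.finrank F U % (t + 1) = (n / 2) % (t + 1), ?_, ?_⟩
    · intro U hU W hW hne hle
      have h1 := (Finset.mem_filter.1 hU).2
      have h2 := (Finset.mem_filter.1 hW).2
      have hlt : Module.finrank F W < Module.finrank F U :=
        Submodule.finrank_lt_finrank_of_lt (lt_of_le_of_ne hle hne.symm)
      have hd : (t + 1) ∣ Module.finrank F U - Module.finrank F W :=
        (Nat.modEq_iff_dvd' hlt.le).1 (h2.trans h1.symm)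
      have := Nat.le_of_dvd (by omega) hd
      omega
    · rw [Finset.card_eq_sum_card_fiberwise (f := fun U : Submodule F (Fin n → F) => Module.finrank F U)
        (t := Finset.range (n + 1))]
      · refine Finset.sum_congr rfl fun l _ => ?_
        rw [Finset.filter_filter]
        split_ifs with h
        · rw [Nat.card_eq_fintype_card, Fintype.card_subtype]
          congr 1
          ext U
          simp only [Finset.mem_filter, Finset.mem_univ, true_and]
          constructor
          · exact fun h => h.2
          · rintro rfl; exact ⟨h, rfl⟩
        · rw [Finset.card_eq_zero, Finset.filter_eq_empty_iff]
          rintro U _ ⟨h1, rfl⟩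
          exact h h1
      · intro U _
        have := Submodule.finrank_le U
        rw [hfin] at this
        simp only [Finset.coe_range, Set.mem_Iio]
        omega
  · rintro _ ⟨C, hC, rfl⟩
    have hq : 2 ≤ Fintype.card F := Fintype.one_lt_card
    have hr : ∀ k, 1 ≤ k → k ≤ n →
        Nat.card {U : Submodule F (Fin n → F) // Module.finrank F U = k} * (Fintype.card F ^ k - 1) =
        Nat.card {U : Submodule F (Fin n → F) // Module.finrank F U = k - 1} *
          (Fintype.card F ^ (n - k + 1) - 1) := by
      intro k h1 h2
      have := Katona.count_rec (F := F) (V := Fin n → F) k h1 (by rw [hfin]; exact h2)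
      rwa [hfin] at this
    have h0 : Nat.card {U : Submodule F (Fin n → F) // Module.finrank F U = 0} = 1 := by
      rw [Nat.card_eq_one_iff_exists]
      exact ⟨⟨⊥, finrank_bot _ _⟩, fun U => Subtype.ext (Submodule.finrank_eq_zero.1 U.2)⟩
    have hn : Nat.card {U : Submodule F (Fin n → F) // Module.finrank F U = n} = 1 := by
      rw [Nat.card_eq_one_iff_exists]
      exact ⟨⟨⊤, by rw [finrank_top, hfin]⟩,
        fun U => Subtype.ext (Submodule.eq_top_of_finrank_eq (by rw [U.2, hfin]))⟩
    apply Katona.upper (t + 1) _ C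
    · intro U hU W hW hne hle
      have := hC U hU W hW hne hle
      omega
    · intro S hS sep
      rw [hfin] at hS
      exact Katona.num (w := fun k => Nat.card {U : Submodule F (Fin n → F) // Module.finrank F U = k})
        (Nat.succ_le_succ (Nat.zero_le t)) (Katona.rec_sym hq h0 hn hr)
        (Katona.rec_dbl hq hr) S hS sep
end

section
/- Let F be a finite field and n a natural number. The maximum cardinality of a set C of linear subspaces of F^n such that no member of C is properly contained in another member of C (i.e., an antichain in the subspace lattice) equals the number of ⌊n/2⌋-dimensional subspaces of F^n. -/
open Module

theorem qs_fiber_card {α β : Type*} [Finite α] [Finite β] (f : α → β) (c : ℕ)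
    (h : ∀ y, Nat.card {x // f x = y} = c) : Nat.card α = Nat.card β * c := by
  classical
  have := Fintype.ofFinite β
  rw [← Nat.card_congr (Equiv.sigmaFiberEquiv f), Nat.card_sigma]
  simp [h]

section
variable {F V : Type*} [Field F] [Fintype F] [AddCommGroup V] [Module F V] [Finite V]

theorem qs_span_fiber {k : ℕ} (U : {U : Submodule F V // finrank F U = k}) :
    Nat.card {s : {s : Fin k → V // LinearIndependent F s} //
      (⟨Submodule.span F (Set.range s.1), by simpa using finrank_span_eq_card s.2⟩ :
        {U : Submodule F V // finrank F U = k}) = U} =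
    ∏ i : Fin k, (Fintype.card F ^ k - Fintype.card F ^ i.val) := by
  obtain ⟨U, hU⟩ := U
  have h := card_linearIndependent (K := F) (V := U) (k := k) hU.ge
  rw [hU] at h
  rw [← h]
  refine Nat.card_congr ⟨fun s => ⟨fun i => ⟨s.1.1 i, ?_⟩, ?_⟩,
    fun t => ⟨⟨fun i => (t.1 i : V), ?_⟩, ?_⟩, ?_, ?_⟩
  · have := s.2
    simp only [Subtype.mk.injEq] at this
    exact this.le (Submodule.subset_span ⟨i, rfl⟩)
  · exact LinearIndependent.of_comp U.subtype s.1.2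
  · exact t.2.map' U.subtype (Submodule.ker_subtype U)
  · have hli : LinearIndependent F (fun i => (t.1 i : V)) :=
      t.2.map' U.subtype (Submodule.ker_subtype U)
    simp only [Subtype.mk.injEq]
    apply Submodule.eq_of_le_of_finrank_eq
    · rw [Submodule.span_le]
      rintro _ ⟨i, rfl⟩
      exact (t.1 i).2
    · rw [finrank_span_eq_card hli, hU]; simp
  · intro s; rfl
  · intro t; rfl

variable (F V) in
theorem qs_count {k : ℕ} (hk : k ≤ finrank F V) :
    ∏ i : Fin k, (Fintype.card F ^ finrank F V - Fintype.card F ^ i.val) =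
    Nat.card {U : Submodule F V // finrank F U = k} *
      ∏ i : Fin k, (Fintype.card F ^ k - Fintype.card F ^ i.val) := by
  rw [← card_linearIndependent hk]
  exact qs_fiber_card _ _ qs_span_fiber

variable (F V) in
theorem qs_step {k : ℕ} (hk : k + 1 ≤ finrank F V) :
    Nat.card {U : Submodule F V // finrank F U = k} * (Fintype.card F ^ (finrank F V - k) - 1) =
    Nat.card {U : Submodule F V // finrank F U = k + 1} * (Fintype.card F ^ (k + 1) - 1) := by
  have h1 := qs_count F V (k := k) (by omega)
  have h2 := qs_count F V hk
  have hq : 1 < Fintype.card F := Fintype.one_lt_card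
  generalize Fintype.card F = q at *
  generalize finrank F V = n at *
  rw [Fin.prod_univ_castSucc] at h2
  conv at h2 => rhs; rw [Fin.prod_univ_succ]
  simp only [Fin.val_castSucc, Fin.val_last, Fin.val_zero, Fin.val_succ, pow_zero] at h2
  rw [h1] at h2
  have h3 : ∏ i : Fin k, (q ^ (k + 1) - q ^ (i.val + 1)) =
      q ^ k * ∏ i : Fin k, (q ^ k - q ^ i.val) := by
    simp_rw [pow_succ, ← Nat.sub_mul]
    rw [Finset.prod_mul_distrib]; simp [mul_comm]
  have h4 : q ^ n - q ^ k = q ^ k * (q ^ (n - k) - 1) := by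
    rw [Nat.mul_sub, ← pow_add, mul_one]; congr 2; omega
  rw [h3, h4] at h2
  have hP : 0 < ∏ i : Fin k, (q ^ k - q ^ i.val) :=
    Finset.prod_pos fun i _ => Nat.sub_pos_of_lt (Nat.pow_lt_pow_right hq i.2)
  have hqk : 0 < q ^ k := by positivity
  apply Nat.eq_of_mul_eq_mul_left (Nat.mul_pos hqk hP)
  linarith

variable (F V) in
theorem qs_max {k : ℕ} (hk : k ≤ finrank F V) :
    Nat.card {U : Submodule F V // finrank F U = k} ≤
    Nat.card {U : Submodule F V // finrank F U = finrank F V / 2} := by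
  have hq : 1 < Fintype.card F := Fintype.one_lt_card
  have pos : ∀ m, 0 < m → 0 < Fintype.card F ^ m - 1 := fun m hm =>
    Nat.sub_pos_of_lt (Nat.one_lt_pow hm.ne' hq)
  have mono : ∀ a b, a ≤ b → Fintype.card F ^ a - 1 ≤ Fintype.card F ^ b - 1 := fun a b h =>
    Nat.sub_le_sub_right (Nat.pow_le_pow_right hq.le h) 1
  rcases le_total k (finrank F V / 2) with h | h
  · obtain ⟨d, hd⟩ := Nat.exists_eq_add_of_le h
    induction d generalizing k with
    | zero => rw [hd]; simp
    | succ d ih =>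
      refine le_trans ?_ (ih (k := k + 1) (by omega) (by omega) (by omega))
      have := qs_step F V (k := k) (by omega)
      refine Nat.le_of_mul_le_mul_right ?_ (pos (finrank F V - k) (by omega))
      rw [this]
      exact Nat.mul_le_mul_left _ (mono _ _ (by omega))
  · induction k, h using Nat.le_induction with
    | base => exact le_rfl
    | succ k h ih =>
      refine le_trans ?_ (ih (by omega))
      have := qs_step F V (k := k) (by omega)
      refine Nat.le_of_mul_le_mul_right ?_ (pos (k + 1) (by omega))
      rw [← this]
      exact Nat.mul_le_mul_left _ (mono _ _ (by omega))

theorem qs_trans (U W : Submodule F V) (h : finrank F U = finrank F W) :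
    ∃ g : V ≃ₗ[F] V, U.map (g : V →ₗ[F] V) = W := by
  obtain ⟨g, hg⟩ := Submodule.exists_linearEquiv_restrict_eq (LinearEquiv.ofFinrankEq U W h)
  refine ⟨g, ?_⟩
  apply Submodule.eq_of_le_of_finrank_eq
  · rintro _ ⟨x, hx, rfl⟩
    have := hg ⟨x, hx⟩
    simp only [LinearEquiv.coe_coe]
    rw [← this]
    exact Subtype.coe_prop _
  · rw [← h]
    exact LinearEquiv.finrank_map_eq g U

theorem qs_flag_fiber {W : Submodule F V} :
    Nat.card (V ≃ₗ[F] V) = Nat.card {U : Submodule F V // finrank F U = finrank F W} *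
      Nat.card {g : V ≃ₗ[F] V // W.map (g : V →ₗ[F] V) = W} := by
  have : Finite (V ≃ₗ[F] V) := DFunLike.finite _
  refine qs_fiber_card (fun g : V ≃ₗ[F] V =>
    (⟨W.map (g : V →ₗ[F] V), LinearEquiv.finrank_map_eq g W⟩ :
      {U : Submodule F V // finrank F U = finrank F W})) _ ?_
  rintro ⟨U, hU⟩
  obtain ⟨h, rfl⟩ := qs_trans W U hU.symm
  refine Nat.card_congr ((Equiv.subtypeEquiv (Equiv.mulLeft h) ?_).symm)
  intro g
  simp only [Equiv.coe_mulLeft, Subtype.mk.injEq]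
  have : W.map ((h * g : V ≃ₗ[F] V) : V →ₗ[F] V) =
      (W.map (g : V →ₗ[F] V)).map (h : V →ₗ[F] V) := by
    rw [← Submodule.map_comp]; rfl
  rw [this]
  exact (Submodule.map_injective_of_injective h.injective).eq_iff.symm

theorem qs_flag_fiber' {W U : Submodule F V} (hU : finrank F U = finrank F W) :
    Nat.card (V ≃ₗ[F] V) = Nat.card {U : Submodule F V // finrank F U = finrank F W} *
      Nat.card {g : V ≃ₗ[F] V // W.map (g : V →ₗ[F] V) = U} := by
  rw [qs_flag_fiber (W := W)]
  congr 1
  obtain ⟨h, rfl⟩ := qs_trans W U hU.symm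
  refine Nat.card_congr ((Equiv.subtypeEquiv (Equiv.mulLeft h) ?_))
  intro g
  simp only [Equiv.coe_mulLeft]
  have : W.map ((h * g : V ≃ₗ[F] V) : V →ₗ[F] V) =
      (W.map (g : V →ₗ[F] V)).map (h : V →ₗ[F] V) := by
    rw [← Submodule.map_comp]; rfl
  rw [this]
  exact (Submodule.map_injective_of_injective h.injective).eq_iff.symm

variable (F V) in
theorem qs_flag : ∃ W : ℕ → Submodule F V, Monotone W ∧
    ∀ k ≤ finrank F V, finrank F (W k) = k := by
  let b := finBasis F V
  refine ⟨fun k => Submodule.span F (b '' {i | i.val < k}), ?_, ?_⟩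
  · intro k l h
    exact Submodule.span_mono (Set.image_mono fun i (hi : i.val < k) => lt_of_lt_of_le hi h)
  · intro k hk
    have hli : LinearIndependent F (fun i : Fin k => b (Fin.castLE hk i)) :=
      b.linearIndependent.comp _ (Fin.castLE_injective hk)
    have := finrank_span_eq_card hli
    rw [Fintype.card_fin] at this
    have hs : b '' {i | i.val < k} = Set.range (fun i : Fin k => b (Fin.castLE hk i)) := by
      ext x
      constructor
      · rintro ⟨i, hi, rfl⟩
        exact ⟨⟨i, hi⟩, rfl⟩
      · rintro ⟨i, rfl⟩
        exact ⟨_, i.2, rfl⟩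
    rw [← hs] at this
    exact this

theorem qs_bound (C : Finset (Submodule F V)) (hC : ∀ U ∈ C, ∀ W ∈ C, ¬ U < W) :
    C.card ≤ Nat.card {U : Submodule F V // finrank F U = finrank F V / 2} := by
  classical
  obtain ⟨W, hW, hr⟩ := qs_flag F V
  have : Finite (V ≃ₗ[F] V) := DFunLike.finite _
  have := Fintype.ofFinite (V ≃ₗ[F] V)
  have hle : ∀ U : Submodule F V, finrank F U ≤ finrank F V := fun U => U.finrank_le
  set M := Nat.card {U : Submodule F V // finrank F U = finrank F V / 2} with hM
  let A : Submodule F V → Finset (V ≃ₗ[F] V) := fun U =>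
    Finset.univ.filter fun g => (W (finrank F U)).map (g : V →ₗ[F] V) = U
  have hA : ∀ U, Nat.card (V ≃ₗ[F] V) ≤ M * (A U).card := by
    intro U
    have hf := hr _ (hle U)
    rw [qs_flag_fiber' hf.symm, hf, Nat.card_eq_fintype_card (α := {g : V ≃ₗ[F] V // _}),
      Fintype.card_subtype]
    exact Nat.mul_le_mul_right _ (qs_max F V (hle U))
  have hd : (C : Set (Submodule F V)).PairwiseDisjoint A := by
    have key : ∀ U ∈ C, ∀ U' ∈ C, ∀ g, g ∈ A U → g ∈ A U' → finrank F U ≤ finrank F U' →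
        U = U' := by
      intro U hU U' hU' g hg hg' h
      have h1 := (Finset.mem_filter.1 hg).2
      have h2 := (Finset.mem_filter.1 hg').2
      have hl : U ≤ U' := by
        rw [← h1, ← h2]; exact Submodule.map_mono (hW h)
      exact hl.eq_of_not_lt (hC U hU U' hU')
    intro U hU U' hU' hne
    refine Finset.disjoint_left.2 fun g hg hg' => hne ?_
    rcases le_total (finrank F U) (finrank F U') with h | h
    · exact key U hU U' hU' g hg hg' h
    · exact (key U' hU' U hU g hg' hg h).symm
  have hG : 0 < Nat.card (V ≃ₗ[F] V) := Nat.card_pos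
  refine Nat.le_of_mul_le_mul_right ?_ hG
  calc C.card * Nat.card (V ≃ₗ[F] V) = ∑ U ∈ C, Nat.card (V ≃ₗ[F] V) := by simp
    _ ≤ ∑ U ∈ C, M * (A U).card := Finset.sum_le_sum fun U _ => hA U
    _ = M * (C.biUnion A).card := by rw [← Finset.mul_sum, Finset.card_biUnion hd]
    _ ≤ M * Nat.card (V ≃ₗ[F] V) := by
      rw [Nat.card_eq_fintype_card]
      exact Nat.mul_le_mul_left _ (Finset.card_le_univ _)

end

/-- q-analog of Sperner's theorem: the maximum cardinality of an antichain of linear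
subspaces of `F^n` (no member properly contained in another) equals the number of
`⌊n/2⌋`-dimensional subspaces of `F^n`. -/
theorem stmt9 (F : Type*) [Field F] [Fintype F] (n : ℕ) :
    IsGreatest {k | ∃ C : Finset (Submodule F (Fin n → F)),
        (∀ U ∈ C, ∀ V ∈ C, ¬ U < V) ∧ C.card = k}
      (Nat.card {U : Submodule F (Fin n → F) // Module.finrank F U = n / 2}) := by
  classical
  constructor
  · have := Fintype.ofFinite (Submodule F (Fin n → F))
    refine ⟨Finset.univ.filter fun U => Module.finrank F U = n / 2, ?_, ?_⟩
    · intro U hU V hV h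
      have h1 := (Finset.mem_filter.1 hU).2
      have h2 := (Finset.mem_filter.1 hV).2
      have := Submodule.finrank_lt_finrank_of_lt h
      omega
    · rw [Nat.card_eq_fintype_card, Fintype.card_subtype]
  · rintro _ ⟨C, hC, rfl⟩
    have := qs_bound C hC
    rwa [Module.finrank_fin_fun] at this
end
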